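/- Let (G,c,o) be an infinite rooted network admitting a potential h which tends to infinity. Then the network is recurrent. (Proof: h(X_{n∧τ_o}) is a nonnegative martingale, hence converges almost surely, contradicting transience if h→∞.) -/

import Mathlib

open scoped ENNReal
open Filter Topology Classical
noncomputable section

/-- A rooted network: a connected, locally finite simple graph with positive
symmetric edge conductances (extended by `0` to non-edges) and a root `o`. -/
structure RootedNetwork (V : Type*) where
  G : SimpleGraph V
  locallyFinite : ∀ x : V, (G.neighborSet x).Finite
  connected : G.Connected
  c : V → V → ℝ
  c_symm : ∀ x y, c x y = c y x
  c_pos : ∀ x y, G.Adj x y → 0 < c x y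
  c_eq_zero : ∀ x y, ¬ G.Adj x y → c x y = 0
  o : V

namespace RootedNetwork

variable {V : Type*}

/-- The vertex weight `c_x = Σ_{z ∼ x} c_{xz}`. -/
noncomputable def cv (N : RootedNetwork V) (x : V) : ℝ := ∑' y, N.c x y

/-- The transition probability `p(x,y) = c_{xy} / c_x` of the network random walk. -/
noncomputable def p (N : RootedNetwork V) (x y : V) : ℝ≥0∞ :=
  ENNReal.ofReal (N.c x y / N.cv x)

/-- The probability that the network random walk started at `x` begins with the
given finite sequence of steps. -/
noncomputable def pathProb (N : RootedNetwork V) : V → List V → ℝ≥0∞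
  | _, [] => 1
  | x, y :: l => N.p x y * pathProb N y l

/-- The probability, starting from `x`, that the walk ever visits `b`
(`P_x(τ_b < ∞)`), computed by decomposing over the finite path up to the first
visit of `b`. -/
noncomputable def hitProb (N : RootedNetwork V) (x b : V) : ℝ≥0∞ :=
  if x = b then 1
  else ∑' l : {l : List V // l.getLast? = some b ∧ b ∉ l.dropLast}, N.pathProb x l.1

/-- A rooted network is recurrent if the walk started from any vertex almost
surely visits the root `o`. -/
def Recurrent (N : RootedNetwork V) : Prop := ∀ x : V, N.hitProb x N.o = 1

/-- The Green kernel `G_o(x,y) = Σ_{n ≥ 0} P_x(X_n = y, τ_o > n)` of the walk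
killed at the root, computed as a sum over finite paths from `x` to `y`
avoiding `o` (the `n = 0` term is the first summand). -/
noncomputable def GreenKer (N : RootedNetwork V) (x y : V) : ℝ≥0∞ :=
  (if x = y ∧ x ≠ N.o then 1 else 0) +
    ∑' l : {l : List V // l.getLast? = some y ∧ N.o ∉ x :: l}, N.pathProb x l.1

/-- The Green density `g_o(x,y) = G_o(x,y) / c_y`. -/
noncomputable def greenDensity (N : RootedNetwork V) (x y : V) : ℝ≥0∞ :=
  N.GreenKer x y / ENNReal.ofReal (N.cv y)

/-- The network Laplacian `Δ f (v) = Σ_{x ∼ v} c_{vx} (f(x) - f(v))`. -/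
noncomputable def lap (N : RootedNetwork V) (f : V → ℝ) (v : V) : ℝ :=
  ∑' x, N.c v x * (f x - f v)

/-- A potential: a nonnegative function vanishing at `o`, with Laplacian `1`
at `o`, harmonic everywhere else. -/
def IsPotential (N : RootedNetwork V) (h : V → ℝ) : Prop :=
  (∀ v, 0 ≤ h v) ∧ h N.o = 0 ∧ N.lap h N.o = 1 ∧ ∀ v, v ≠ N.o → N.lap h v = 0

end RootedNetwork

/-!
The function `u x = P_x(τ_o < ∞)` satisfies `u o = 1` and, by conditioning on the first step, is
harmonic off `o`. For `ε > 0` the function `u + ε h` is then superharmonic off `o`, and it is at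
least `1 + ε h(o)` both at `o` and, because `h → ∞`, outside a finite set. The minimum principle
gives `u x + ε h(x) ≥ 1 + ε h(o)` for every `x`, and letting `ε → 0` gives `u x ≥ 1`.

That `u ≤ 1` is an instance of Kraft's inequality: no first-passage path to `o` is a proper prefix
of another one.
-/

theorem tendsto_cofinite_atTop_of_finite_setOf_le {α β : Type*} [LinearOrder β] [NoMaxOrder β]
    {f : α → β} {c : β} (hf : ∀ M, c < M → {a | f a ≤ M}.Finite) : Tendsto f cofinite atTop := by
  obtain ⟨d, hcd⟩ := exists_gt c
  refine tendsto_atTop.2 fun M => eventually_cofinite.2 ?_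
  refine (hf (max M d) (lt_max_of_lt_right hcd)).subset fun a ha => ?_
  exact (not_le.1 ha).le.trans (le_max_left M d)

namespace RootedNetwork

variable {V : Type*} (N : RootedNetwork V)

theorem c_nonneg (x y : V) : 0 ≤ N.c x y := by
  by_cases hxy : N.G.Adj x y
  · exact (N.c_pos x y hxy).le
  · exact (N.c_eq_zero x y hxy).ge

theorem summable_c_mul (x : V) (f : V → ℝ) : Summable fun y => N.c x y * f y := by
  refine summable_of_hasFiniteSupport ((N.locallyFinite x).subset fun y hy => ?_)
  by_contra hxy
  exact hy (by simp only [N.c_eq_zero x y hxy, zero_mul])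

theorem summable_c (x : V) : Summable (N.c x) := by
  simpa only [mul_one] using N.summable_c_mul x fun _ => 1

theorem cv_nonneg (x : V) : 0 ≤ N.cv x :=
  tsum_nonneg (N.c_nonneg x)

theorem c_le_cv (x y : V) : N.c x y ≤ N.cv x :=
  (N.summable_c x).le_tsum y fun z _ => N.c_nonneg x z

theorem cv_mul_toReal_p (x y : V) : N.cv x * (N.p x y).toReal = N.c x y := by
  rw [p, ENNReal.toReal_ofReal (div_nonneg (N.c_nonneg x y) (N.cv_nonneg x))]
  refine mul_div_cancel_of_imp' fun hcv => ?_
  exact le_antisymm ((N.c_le_cv x y).trans_eq hcv) (N.c_nonneg x y)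

theorem p_ne_top (x y : V) : N.p x y ≠ ∞ :=
  ENNReal.ofReal_ne_top

-- The sum is `0` on the one-vertex network, where `N.cv x = 0`.
theorem tsum_p_le_one (x : V) : ∑' y, N.p x y ≤ 1 := by
  simp only [p]
  rw [← ENNReal.ofReal_tsum_of_nonneg
    (fun y => div_nonneg (N.c_nonneg x y) (N.cv_nonneg x)) ((N.summable_c x).div_const _),
    tsum_div_const]
  exact ENNReal.ofReal_le_one.2 (div_self_le_one (N.cv x))

theorem lap_add (f g : V → ℝ) (v : V) : N.lap (f + g) v = N.lap f v + N.lap g v := by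
  rw [lap, lap, lap, ← (N.summable_c_mul v _).tsum_add (N.summable_c_mul v _)]
  exact tsum_congr fun x => by simp only [Pi.add_apply]; ring

theorem lap_smul (a : ℝ) (f : V → ℝ) (v : V) : N.lap (a • f) v = a * N.lap f v := by
  rw [lap, lap, ← tsum_mul_left]
  exact tsum_congr fun x => by simp only [Pi.smul_apply, smul_eq_mul]; ring

theorem lap_eq_cv_mul (f : V → ℝ) (v : V) :
    N.lap f v = N.cv v * (∑' x, (N.p v x).toReal * f x - f v) := by
  calc N.lap f v = ∑' x, (N.c v x * f x - N.c v x * f v) := by simp only [lap, mul_sub]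
    _ = ∑' x, N.c v x * f x - N.cv v * f v := by
      rw [(N.summable_c_mul v f).tsum_sub ((N.summable_c v).mul_right _), tsum_mul_right, cv]
    _ = N.cv v * (∑' x, (N.p v x).toReal * f x - f v) := by
      simp only [mul_sub, ← tsum_mul_left, ← mul_assoc, cv_mul_toReal_p]

variable {N}

theorem eq_of_adj_of_lap_nonpos_of_forall_le {f : V → ℝ} {v w : V} (hlap : N.lap f v ≤ 0)
    (hmin : ∀ x, f v ≤ f x) (hvw : N.G.Adj v w) : f w = f v := by
  have hterm_nonneg : ∀ x, 0 ≤ N.c v x * (f x - f v) := fun x =>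
    mul_nonneg (N.c_nonneg v x) (sub_nonneg.2 (hmin x))
  have hterm_le : N.c v w * (f w - f v) ≤ N.lap f v :=
    (N.summable_c_mul v _).le_tsum w fun x _ => hterm_nonneg x
  have hterm : N.c v w * (f w - f v) = 0 := (hterm_le.trans hlap).antisymm (hterm_nonneg w)
  exact sub_eq_zero.1 ((mul_eq_zero_iff_left (N.c_pos v w hvw).ne').1 hterm)

theorem eq_of_lap_nonpos_of_forall_le {f : V → ℝ} {a b : V} (hlap : ∀ v, v ≠ b → N.lap f v ≤ 0)
    (hmin : ∀ x, f a ≤ f x) : f b = f a := by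
  by_contra hne
  have hconst : ∀ w, N.G.Reachable a w → f w = f a := by
    intro w haw
    rw [SimpleGraph.reachable_iff_reflTransGen] at haw
    induction haw with
    | refl => rfl
    | @tail v w _ hvw ih =>
      have hvb : v ≠ b := fun h => hne (h ▸ ih)
      have hminv : ∀ x, f v ≤ f x := fun x => ih.trans_le (hmin x)
      exact (eq_of_adj_of_lap_nonpos_of_forall_le (hlap v hvb) hminv hvw).trans ih
  exact hne (hconst b (N.connected.preconnected a b))

theorem le_of_lap_nonpos_of_eventually_le {f : V → ℝ} {b : V} {m : ℝ}
    (hlap : ∀ v, v ≠ b → N.lap f v ≤ 0) (hb : m ≤ f b) (hinfty : ∀ᶠ v in cofinite, m ≤ f v)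
    (v : V) : m ≤ f v := by
  by_contra hv
  obtain ⟨a, ha, hmin⟩ := Set.exists_min_image {x | ¬ m ≤ f x} f (eventually_cofinite.1 hinfty)
    ⟨v, hv⟩
  have hmin' : ∀ x, f a ≤ f x := fun x => by
    by_cases hx : m ≤ f x
    · exact (not_le.1 ha).le.trans hx
    · exact hmin x hx
  exact ha (hb.trans_eq (eq_of_lap_nonpos_of_forall_le hlap hmin'))

variable (N)

/-- The total probability, under the walk from `x`, of the finite step sequences in `L`. This is the
expected number of members of `L` with which the walk begins, hence the probability that it begins
with some member of `L` if no member is a proper prefix of another. -/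
def pathWeight (x : V) (L : Set (List V)) : ℝ≥0∞ := ∑' l : L, N.pathProb x l

theorem pathWeight_mono (x : V) {L K : Set (List V)} (hLK : L ⊆ K) :
    N.pathWeight x L ≤ N.pathWeight x K :=
  ENNReal.tsum_mono_subtype (N.pathProb x) hLK

theorem pathWeight_singleton_nil (x : V) : N.pathWeight x {[]} = 1 :=
  tsum_singleton [] (N.pathProb x)

theorem pathWeight_eq_tsum_of_nil_notMem (x : V) {L : Set (List V)} (hL : [] ∉ L) :
    N.pathWeight x L = ∑' y, N.p x y * N.pathWeight y (List.cons y ⁻¹' L) := by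
  have hunion : L = ⋃ y, List.cons y '' (List.cons y ⁻¹' L) := by
    ext l
    cases l <;> simp [hL]
  have hdisj : Set.univ.PairwiseDisjoint fun y : V => List.cons y '' (List.cons y ⁻¹' L) := by
    intro y _ z _ hyz
    refine Set.disjoint_left.2 ?_
    rintro _ ⟨l, _, rfl⟩ ⟨k, _, hk⟩
    exact hyz (List.cons.inj hk).1.symm
  calc N.pathWeight x L
      = ∑' l : ⋃ y, List.cons y '' (List.cons y ⁻¹' L), N.pathProb x l := by
        rw [← hunion, pathWeight]
    _ = ∑' y, ∑' l : List.cons y '' (List.cons y ⁻¹' L), N.pathProb x l :=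
        ENNReal.tsum_biUnion hdisj
    _ = ∑' y, N.p x y * N.pathWeight y (List.cons y ⁻¹' L) := by
        refine tsum_congr fun y => ?_
        rw [tsum_image (N.pathProb x) List.cons_injective.injOn, pathWeight,
          ← ENNReal.tsum_mul_left]
        rfl

theorem pathWeight_le_one_of_length_le (n : ℕ) (x : V) {L : Set (List V)}
    (hL : IsAntichain (· <+: ·) L) (hlength : ∀ l ∈ L, l.length ≤ n) : N.pathWeight x L ≤ 1 := by
  induction n generalizing x L with
  | zero =>
    have hsub : L ⊆ {[]} := fun l hl => List.length_eq_zero_iff.1 (Nat.le_zero.1 (hlength l hl))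
    exact (N.pathWeight_mono x hsub).trans_eq (N.pathWeight_singleton_nil x)
  | succ n ih =>
    by_cases hnil : [] ∈ L
    · have hsub : L ⊆ {[]} := fun l hl => (hL.eq hnil hl l.nil_prefix).symm
      exact (N.pathWeight_mono x hsub).trans_eq (N.pathWeight_singleton_nil x)
    · rw [N.pathWeight_eq_tsum_of_nil_notMem x hnil]
      refine (ENNReal.tsum_le_tsum fun y => mul_le_of_le_one_right' ?_).trans (N.tsum_p_le_one x)
      refine ih y ?_ fun l hl => Nat.le_of_succ_le_succ (hlength (y :: l) hl)
      exact hL.preimage List.cons_injective fun _ _ h => List.cons_prefix_cons.2 ⟨rfl, h⟩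

theorem pathWeight_le_one (x : V) {L : Set (List V)} (hL : IsAntichain (· <+: ·) L) :
    N.pathWeight x L ≤ 1 := by
  rw [pathWeight, ENNReal.tsum_eq_iSup_sum]
  refine iSup_le fun s => ?_
  let t : Finset (List V) := s.map (Function.Embedding.subtype _)
  have ht : (t : Set (List V)) ⊆ L := by
    intro l hl
    obtain ⟨k, _, rfl⟩ := Finset.mem_map.1 hl
    exact k.2
  calc ∑ l ∈ s, N.pathProb x l = N.pathWeight x t := by
        rw [pathWeight, Finset.tsum_subtype' t (N.pathProb x), Finset.sum_map]
        rfl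
    _ ≤ 1 := N.pathWeight_le_one_of_length_le (t.sup List.length) x (hL.subset ht)
        fun _ hl => Finset.le_sup hl

/-- The step sequences whose first visit to `b` is at their last step. The starting vertex is not
part of a step sequence, so a walk started at `b` is recorded up to its first return. -/
def firstPassagePaths (b : V) : Set (List V) := {l | l.getLast? = some b ∧ b ∉ l.dropLast}

theorem nil_notMem_firstPassagePaths (b : V) : [] ∉ firstPassagePaths b := by
  simp [firstPassagePaths]

theorem cons_preimage_firstPassagePaths_self (b : V) :
    List.cons b ⁻¹' firstPassagePaths b = {[]} := by
  ext l
  cases l <;> simp [firstPassagePaths]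

theorem cons_preimage_firstPassagePaths_of_ne {y b : V} (hyb : y ≠ b) :
    List.cons y ⁻¹' firstPassagePaths b = firstPassagePaths b := by
  ext l
  cases l <;> simp [firstPassagePaths, hyb, hyb.symm]

theorem isAntichain_firstPassagePaths (b : V) : IsAntichain (· <+: ·) (firstPassagePaths b) := by
  rintro l hl k hk hne ⟨r, rfl⟩
  have hr : r ≠ [] := fun h => hne (by rw [h, List.append_nil])
  refine hk.2 ?_
  rw [List.dropLast_append_of_ne_nil hr]
  exact List.mem_append_left _ (List.mem_of_getLast? hl.1)

theorem hitProb_self (b : V) : N.hitProb b b = 1 :=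
  if_pos rfl

theorem hitProb_eq_pathWeight {x b : V} (hxb : x ≠ b) :
    N.hitProb x b = N.pathWeight x (firstPassagePaths b) :=
  if_neg hxb

theorem hitProb_le_one (x b : V) : N.hitProb x b ≤ 1 := by
  rcases eq_or_ne x b with rfl | hxb
  · exact (N.hitProb_self x).le
  · exact (N.hitProb_eq_pathWeight hxb).trans_le
      (N.pathWeight_le_one x (isAntichain_firstPassagePaths b))

theorem hitProb_ne_top (x b : V) : N.hitProb x b ≠ ∞ :=
  ne_top_of_le_ne_top ENNReal.one_ne_top (N.hitProb_le_one x b)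

theorem hitProb_eq_tsum {x b : V} (hxb : x ≠ b) :
    N.hitProb x b = ∑' y, N.p x y * N.hitProb y b := by
  rw [N.hitProb_eq_pathWeight hxb,
    N.pathWeight_eq_tsum_of_nil_notMem x (nil_notMem_firstPassagePaths b)]
  refine tsum_congr fun y => ?_
  rcases eq_or_ne y b with rfl | hyb
  · rw [cons_preimage_firstPassagePaths_self, pathWeight_singleton_nil, hitProb_self]
  · rw [cons_preimage_firstPassagePaths_of_ne hyb, N.hitProb_eq_pathWeight hyb]

theorem lap_toReal_hitProb {x b : V} (hxb : x ≠ b) :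
    N.lap (fun y => (N.hitProb y b).toReal) x = 0 := by
  have hmean : (N.hitProb x b).toReal = ∑' y, (N.p x y).toReal * (N.hitProb y b).toReal := by
    rw [N.hitProb_eq_tsum hxb, ENNReal.tsum_toReal_eq fun y =>
      ENNReal.mul_ne_top (N.p_ne_top x y) (N.hitProb_ne_top y b)]
    simp only [ENNReal.toReal_mul]
  rw [lap_eq_cv_mul, ← hmean, sub_self, mul_zero]

variable {N}

theorem one_add_mul_le_toReal_hitProb_add_mul {h : V → ℝ} {b : V}
    (hlap : ∀ v, v ≠ b → N.lap h v ≤ 0) (hinfty : Tendsto h cofinite atTop)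
    {ε : ℝ} (hε : 0 < ε) (x : V) : 1 + ε * h b ≤ (N.hitProb x b).toReal + ε * h x := by
  let u : V → ℝ := fun y => (N.hitProb y b).toReal
  refine le_of_lap_nonpos_of_eventually_le (N := N) (f := u + ε • h) (b := b)
    ?superharmonic ?root ?infty x
  case superharmonic =>
    intro v hv
    rw [lap_add, lap_smul, N.lap_toReal_hitProb hv, zero_add]
    exact mul_nonpos_of_nonneg_of_nonpos hε.le (hlap v hv)
  case root => simp [u, hitProb_self]
  case infty =>
    filter_upwards [(hinfty.const_mul_atTop hε).eventually_ge_atTop (1 + ε * h b)] with v hv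
    exact hv.trans (le_add_of_nonneg_left ENNReal.toReal_nonneg)

end RootedNetwork

theorem recurrent_of_potential_tendsto_infinity_general {V : Type*} (N : RootedNetwork V)
    (h : V → ℝ) (hlap : ∀ v, v ≠ N.o → N.lap h v ≤ 0) (hinfty : Tendsto h cofinite atTop) :
    N.Recurrent := by
  intro x
  set u : ℝ := (N.hitProb x N.o).toReal with hu
  have hcomparison : ∀ᶠ ε in 𝓝[>] (0 : ℝ), 1 + ε * h N.o ≤ u + ε * h x :=
    eventually_mem_nhdsWithin.mono fun ε hε =>
      RootedNetwork.one_add_mul_le_toReal_hitProb_add_mul hlap hinfty hε x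
  have hlimit (a t : ℝ) : Tendsto (fun ε : ℝ => a + ε * t) (𝓝[>] 0) (𝓝 a) :=
    tendsto_nhdsWithin_of_tendsto_nhds (Continuous.tendsto' (by fun_prop) 0 a (by simp))
  have hone_le : 1 ≤ u := le_of_tendsto_of_tendsto (hlimit 1 _) (hlimit u _) hcomparison
  refine (N.hitProb_le_one x N.o).antisymm ?_
  rwa [hu, ← ENNReal.toReal_one,
    ENNReal.toReal_le_toReal ENNReal.one_ne_top (N.hitProb_ne_top x N.o)] at hone_le

/-- If an infinite rooted network admits a potential tending to infinity, then
it is recurrent. -/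
theorem recurrent_of_potential_tendsto_infinity {V : Type*} [Infinite V]
    (N : RootedNetwork V) (h : V → ℝ) (hpot : N.IsPotential h)
    (htends : ∀ M : ℝ, 0 < M → {v : V | h v ≤ M}.Finite) :
    N.Recurrent :=
  recurrent_of_potential_tendsto_infinity_general N h (fun v hv => (hpot.2.2.2 v hv).le)
    (tendsto_cofinite_atTop_of_finite_setOf_le htends)
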